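/- (A priori bound, nondivergent form) Let p ∈ (1,∞), l ∈ (0,p), n ∈ [1,∞) real, R ∈ (0,∞]. Let φ : ℝ → ℝ be continuous and odd with τφ(τ) > 0 for a.e. τ, and set Φ(t) := ∫_0^t φ(s) ds. Let a be locally absolutely continuous on [0,R) with a > 0 a.e., let δ_a(τ) := (n−1)a(τ)/τ − (1−1/p)a'(τ) satisfy δ_a > 0 a.e. with δ_a and δ_a^{−1/(p−1)} locally integrable on [0,R). Let h : (0,R) × ℝ² → ℝ be a Carathéodory function such that for some θ ∈ (0,1] and a non-negative measurable q locally integrable on [0,R): h(τ,λ₀,λ₁)λ₁ ≤ θ q(τ)|λ₀|^l |λ₁|^{p−l} + (1−θ) δ_a(τ)|λ₁|^p for all λ₀, λ₁ ∈ ℝ and a.e. τ. Assume K(0,R,q,δ_a) ≤ 1. Let u be locally absolutely continuous on (0,R) with Φ_p(u') locally absolutely continuous on [0,R) (in particular u, u' extend continuously to [0,R)), u(0) = 0, and suppose u solves the nondivergent ODE: a(τ)(Φ_p(u'(τ)))' + (n−1)(a(τ)/τ)Φ_p(u'(τ)) − h(τ,u(τ),u'(τ)) + φ(u(τ)) = 0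 for a.e. τ ∈ (0,R). Then for every r ∈ (0,R): Φ(|u(r)|) ≤ (1 − 1/p) a(0) |u'(0)|^p. -/

import Mathlib

open MeasureTheory Set Filter
open scoped ENNReal

/-- `Φ_p(λ) = |λ|^{p-2} λ` for `λ ≠ 0`, and `Φ_p(0) = 0`. -/
noncomputable def PhiP (p x : ℝ) : ℝ := if x = 0 then 0 else |x| ^ (p - 2) * x

/-- `u` is absolutely continuous on `[s,t]` with a.e. derivative `u'`:
`u'` is integrable on `[s,t]` and the fundamental theorem of calculus holds. -/
def ACOn (u u' : ℝ → ℝ) (s t : ℝ) : Prop :=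
  MeasureTheory.IntegrableOn u' (Set.Icc s t) ∧
    ∀ x ∈ Set.Icc s t, u x = u s + ∫ σ in s..x, u' σ

/-- The Beesack–Das constant
`K(s,·,q,v) = ((p-l)/p)^{(p-l)/p} [∫_S q(t)^{p/l} v(t)^{-(p-l)/l}
  (∫_s^t v(σ)^{-1/(p-1)} dσ)^{p-1} dt]^{l/p}`, over a set `S`. -/
noncomputable def BDK (p l : ℝ) (q v : ℝ → ℝ) (s : ℝ) (S : Set ℝ) : ℝ≥0∞ :=
  ENNReal.ofReal (((p - l) / p) ^ ((p - l) / p)) *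
    (∫⁻ t in S,
      ENNReal.ofReal (q t) ^ (p / l) * ENNReal.ofReal (v t) ^ (-((p - l) / l)) *
        (∫⁻ σ in Set.Ioc s t, ENNReal.ofReal (v σ) ^ (-(1 / (p - 1)))) ^ (p - 1)) ^ (l / p)

/-- `δ_a(τ) = (n-1) a(τ)/τ - (1 - 1/p) a'(τ)`. -/
noncomputable def deltaA (n p : ℝ) (a a' : ℝ → ℝ) : ℝ → ℝ :=
  fun τ => (n - 1) * a τ / τ - (1 - 1 / p) * a' τ

/-- `d_a(τ) = (n-1) a(τ)/τ + (1/p) a'(τ)`. -/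
noncomputable def dA (n p : ℝ) (a a' : ℝ → ℝ) : ℝ → ℝ :=
  fun τ => (n - 1) * a τ / τ + (1 / p) * a' τ

/-!
Along a solution the energy `E = (1 - 1/p) a |u'|^p + Φ(u)` has derivative
`E' = h(τ, u, u') u' - δ_a |u'|^p ≤ θ (q |u|^l |u'|^(p-l) - δ_a |u'|^p)`. The Opial-type inequality
of Beesack and Das bounds `∫ q |u|^l |u'|^(p-l)` by `K ∫ δ_a |u'|^p`: Hölder's inequality on
`[0, τ]` bounds `|u|` in terms of the primitive `Y` of `δ_a |u'|^p`, a second one separates the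
weights, and `∫ Y^m Y' = Y^(m+1) / (m+1)` evaluates the rest. With `K ≤ 1` this makes `∫ E'`
nonpositive. Since `E'` and `q |u|^l |u'|^(p-l)` are integrable, so is `δ_a |u'|^p`, even where
`δ_a` is not.
-/

section AbsolutelyContinuous

variable {f f' g g' : ℝ → ℝ} {s t : ℝ}

lemma absolutelyContinuousOnInterval_of_dist_le_mul {K : ℝ}
    (hfg : ∀ x ∈ uIcc s t, ∀ y ∈ uIcc s t, dist (g x) (g y) ≤ K * dist (f x) (f y))
    (hf : AbsolutelyContinuousOnInterval f s t) : AbsolutelyContinuousOnInterval g s t := by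
  rw [AbsolutelyContinuousOnInterval] at hf ⊢
  have hK := hf.const_mul K
  rw [mul_zero] at hK
  refine squeeze_zero' (Eventually.of_forall fun E => Finset.sum_nonneg fun i _ => dist_nonneg)
    ?_ hK
  filter_upwards [mem_inf_of_right (mem_principal_self _)] with E hE
  rw [Finset.mul_sum]
  exact Finset.sum_le_sum fun i hi => hfg _ (hE.1 i hi).1 _ (hE.1 i hi).2

namespace ACOn

lemma integrableOn_Ioc (hf : ACOn f f' s t) : IntegrableOn f' (Ioc s t) :=
  hf.1.mono_set Ioc_subset_Icc_self

lemma intervalIntegrable (hst : s ≤ t) (hf : ACOn f f' s t) : IntervalIntegrable f' volume s t :=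
  (intervalIntegrable_iff_integrableOn_Ioc_of_le hst).2 hf.integrableOn_Ioc

lemma absolutelyContinuousOnInterval (hst : s ≤ t) (hf : ACOn f f' s t) :
    AbsolutelyContinuousOnInterval f s t := by
  have hprim := (hf.intervalIntegrable hst).absolutelyContinuousOnInterval_intervalIntegral
    left_mem_uIcc
  refine absolutelyContinuousOnInterval_of_dist_le_mul (K := 1) (fun x hx y hy => ?_) hprim
  rw [uIcc_of_le hst] at hx hy
  rw [hf.2 x hx, hf.2 y hy, dist_add_left, one_mul]

lemma continuousOn (hst : s ≤ t) (hf : ACOn f f' s t) : ContinuousOn f (Icc s t) :=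
  uIcc_of_le hst ▸ (hf.absolutelyContinuousOnInterval hst).continuousOn

lemma ae_hasDerivAt (hst : s ≤ t) (hf : ACOn f f' s t) :
    ∀ᵐ x ∂volume.restrict (Ioc s t), HasDerivAt f (f' x) x := by
  rw [← restrict_Ioo_eq_restrict_Ioc, ae_restrict_iff' measurableSet_Ioo]
  filter_upwards [(hf.intervalIntegrable hst).ae_hasDerivAt_integral] with x hprim hx
  rw [uIcc_of_le hst] at hprim
  refine ((hprim (Ioo_subset_Icc_self hx) s (left_mem_Icc.2 hst)).const_add
    (f s)).congr_of_eventuallyEq ?_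
  filter_upwards [Ioo_mem_nhds hx.1 hx.2] with y hy using hf.2 y (Ioo_subset_Icc_self hy)

lemma of_ae_hasDerivAt (hst : s ≤ t) (hf : AbsolutelyContinuousOnInterval f s t)
    (hd : ∀ᵐ x ∂volume.restrict (Ioc s t), HasDerivAt f (f' x) x) : ACOn f f' s t := by
  have hderiv : deriv f =ᵐ[volume.restrict (Ioc s t)] f' := hd.mono fun x hx => hx.deriv
  refine ⟨IntegrableOn.congr_set_ae
    (((intervalIntegrable_iff_integrableOn_Ioc_of_le hst).1 hf.intervalIntegrable_deriv).congr
      hderiv) Ioc_ae_eq_Icc.symm, fun x hx => ?_⟩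
  have hsub : uIcc s x ⊆ uIcc s t := by
    rw [uIcc_of_le hst, uIcc_of_le hx.1]; exact Icc_subset_Icc_right hx.2
  rw [← sub_eq_iff_eq_add', ← (hf.mono hsub).integral_deriv_eq_sub,
    intervalIntegral.integral_of_le hx.1, intervalIntegral.integral_of_le hx.1]
  exact integral_congr_ae (ae_restrict_of_ae_restrict_of_subset (Ioc_subset_Ioc_right hx.2) hderiv)

lemma setIntegral_eq_sub (hst : s ≤ t) (hf : ACOn f f' s t) :
    ∫ x in Ioc s t, f' x = f t - f s := by
  rw [hf.2 t (right_mem_Icc.2 hst), add_sub_cancel_left, intervalIntegral.integral_of_le hst]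

lemma congr_deriv (hst : s ≤ t) (hf : ACOn f f' s t)
    (hfg : f' =ᵐ[volume.restrict (Ioc s t)] g') : ACOn f g' s t := by
  refine .of_ae_hasDerivAt hst (hf.absolutelyContinuousOnInterval hst) ?_
  filter_upwards [hf.ae_hasDerivAt hst, hfg] with x hx heq using heq ▸ hx

lemma add (hst : s ≤ t) (hf : ACOn f f' s t) (hg : ACOn g g' s t) :
    ACOn (fun x => f x + g x) (fun x => f' x + g' x) s t := by
  refine .of_ae_hasDerivAt hst
    ((hf.absolutelyContinuousOnInterval hst).add (hg.absolutelyContinuousOnInterval hst)) ?_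
  filter_upwards [hf.ae_hasDerivAt hst, hg.ae_hasDerivAt hst] with x hfx hgx using hfx.add hgx

lemma mul (hst : s ≤ t) (hf : ACOn f f' s t) (hg : ACOn g g' s t) :
    ACOn (fun x => f x * g x) (fun x => f' x * g x + f x * g' x) s t := by
  refine .of_ae_hasDerivAt hst
    ((hf.absolutelyContinuousOnInterval hst).mul (hg.absolutelyContinuousOnInterval hst)) ?_
  filter_upwards [hf.ae_hasDerivAt hst, hg.ae_hasDerivAt hst] with x hfx hgx using hfx.mul hgx

lemma const_mul (hst : s ≤ t) (c : ℝ) (hf : ACOn f f' s t) :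
    ACOn (fun x => c * f x) (fun x => c * f' x) s t := by
  refine .of_ae_hasDerivAt hst ((hf.absolutelyContinuousOnInterval hst).const_mul c) ?_
  filter_upwards [hf.ae_hasDerivAt hst] with x hfx using hfx.const_mul c

lemma comp {G G' : ℝ → ℝ} (hst : s ≤ t) (hG : ∀ y, HasDerivAt G (G' y) y) (hG' : Continuous G')
    (hf : ACOn f f' s t) : ACOn (fun x => G (f x)) (fun x => G' (f x) * f' x) s t := by
  have hac := hf.absolutelyContinuousOnInterval hst
  obtain ⟨C, hC⟩ := hac.exists_bound
  have hG1 : ContDiff ℝ 1 G := by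
    rw [contDiff_one_iff_deriv, funext fun y => (hG y).deriv]
    exact ⟨fun y => (hG y).differentiableAt, hG'⟩
  obtain ⟨K, hK⟩ := (hG1.contDiffOn (s := Icc (-C) C)).exists_lipschitzOnWith one_ne_zero
    (convex_Icc _ _) isCompact_Icc
  refine .of_ae_hasDerivAt hst (absolutelyContinuousOnInterval_of_dist_le_mul (K := K)
    (fun x hx y hy => hK.dist_le_mul _ (abs_le.1 (hC x hx)) _ (abs_le.1 (hC y hy))) hac) ?_
  filter_upwards [hf.ae_hasDerivAt hst] with x hx using (hG (f x)).comp x hx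

end ACOn

end AbsolutelyContinuous

section PhiP

lemma PhiP_eq_rpow_mul (p x : ℝ) : PhiP p x = |x| ^ (p - 2) * x := by
  by_cases hx : x = 0 <;> simp [PhiP, hx]

lemma hasDerivAt_abs_rpow_PhiP {p : ℝ} (hp : 1 < p) (x : ℝ) :
    HasDerivAt (fun y : ℝ => |y| ^ p) (p * PhiP p x) x := by
  rw [PhiP_eq_rpow_mul, ← mul_assoc]
  exact hasDerivAt_abs_rpow x hp

lemma continuous_PhiP {p : ℝ} (hp : 1 < p) : Continuous (PhiP p) := by
  have hderiv : Continuous (deriv fun y : ℝ => |y| ^ p) :=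
    (contDiff_one_iff_deriv.1 (contDiff_norm_rpow (E := ℝ) hp)).2
  rw [funext fun y => (hasDerivAt_abs_rpow_PhiP hp y).deriv] at hderiv
  simpa [(zero_lt_one.trans hp).ne'] using hderiv.const_mul p⁻¹

lemma abs_PhiP {p : ℝ} (hp : 1 < p) (x : ℝ) : |PhiP p x| = |x| ^ (p - 1) := by
  rcases eq_or_ne x 0 with rfl | hx
  · simp [PhiP, Real.zero_rpow (sub_pos.2 hp).ne']
  · rw [PhiP_eq_rpow_mul, abs_mul, abs_of_nonneg (by positivity),
      ← Real.rpow_add_one (abs_ne_zero.2 hx)]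
    ring_nf

lemma PhiP_of_nonneg {p x : ℝ} (hp : 1 < p) (hx : 0 ≤ x) : PhiP p x = x ^ (p - 1) := by
  have hPhi : 0 ≤ PhiP p x := by rw [PhiP_eq_rpow_mul]; positivity
  rw [← abs_of_nonneg hPhi, abs_PhiP hp, abs_of_nonneg hx]

lemma PhiP_mul_self {p : ℝ} (hp : 1 < p) (x : ℝ) : PhiP p x * x = |x| ^ p := by
  rcases eq_or_ne x 0 with rfl | hx
  · simp [Real.zero_rpow (zero_lt_one.trans hp).ne']
  · rw [PhiP_eq_rpow_mul, mul_assoc, ← sq, ← sq_abs, ← Real.rpow_add_natCast (abs_ne_zero.2 hx)]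
    norm_num

variable {p q : ℝ}

lemma abs_PhiP_rpow_conj (hpq : p.HolderConjugate q) (x : ℝ) : |PhiP p x| ^ q = |x| ^ p := by
  rw [abs_PhiP hpq.lt, ← Real.rpow_mul (abs_nonneg x), hpq.sub_one_mul_conj]

lemma PhiP_conj_PhiP (hpq : p.HolderConjugate q) (x : ℝ) : PhiP q (PhiP p x) = x := by
  rcases eq_or_ne x 0 with rfl | hx
  · simp [PhiP]
  · have hexp : (p - 1) * (q - 2) + (p - 2) = 0 := by linear_combination hpq.sub_one_mul_conj
    rw [PhiP_eq_rpow_mul, abs_PhiP hpq.lt, ← Real.rpow_mul (abs_nonneg x), PhiP_eq_rpow_mul,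
      ← mul_assoc, ← Real.rpow_add (abs_pos.2 hx), hexp, Real.rpow_zero, one_mul]

lemma ACOn.abs_rpow {f f' : ℝ → ℝ} {s t : ℝ} (hp : 1 < p) (hst : s ≤ t) (hf : ACOn f f' s t) :
    ACOn (fun x => |f x| ^ p) (fun x => p * PhiP p (f x) * f' x) s t :=
  hf.comp hst (hasDerivAt_abs_rpow_PhiP hp) ((continuous_PhiP hp).const_mul p)

end PhiP

section Opial

lemma acOn_toReal_setLIntegral {G : ℝ → ℝ≥0∞} {s t : ℝ}
    (hG : AEMeasurable G (volume.restrict (Ioc s t))) (hfin : ∫⁻ x in Ioc s t, G x ≠ ⊤) :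
    ACOn (fun x => (∫⁻ σ in Ioc s x, G σ).toReal) (fun x => (G x).toReal) s t := by
  refine ⟨IntegrableOn.congr_set_ae (integrable_toReal_of_lintegral_ne_top hG hfin)
    Ioc_ae_eq_Icc.symm, fun x hx => ?_⟩
  have hsub : Ioc s x ⊆ Ioc s t := Ioc_subset_Ioc_right hx.2
  rw [intervalIntegral.integral_of_le hx.1, integral_toReal (hG.mono_set hsub)
    (ae_restrict_of_ae_restrict_of_subset hsub (ae_lt_top' hG hfin))]
  simp

lemma lintegral_primitive_rpow_mul_le {G : ℝ → ℝ≥0∞} {s t m : ℝ} (hst : s ≤ t) (hm : 0 < m)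
    (hG : AEMeasurable G (volume.restrict (Ioc s t))) :
    ∫⁻ x in Ioc s t, (∫⁻ σ in Ioc s x, G σ) ^ m * G x ≤
      ENNReal.ofReal (1 / (m + 1)) * (∫⁻ x in Ioc s t, G x) ^ (m + 1) := by
  have hm1 : 0 < m + 1 := by positivity
  rcases eq_or_ne (∫⁻ x in Ioc s t, G x) ⊤ with htop | hfin
  · simp [htop, ENNReal.top_rpow_of_pos hm1, ENNReal.mul_top, hm1]
  set Y : ℝ → ℝ := fun x => (∫⁻ σ in Ioc s x, G σ).toReal
  have hY_ofReal : ∀ x ≤ t, ENNReal.ofReal (Y x) = ∫⁻ σ in Ioc s x, G σ := fun x hx =>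
    ENNReal.ofReal_toReal (ne_top_of_le_ne_top hfin (lintegral_mono_set (Ioc_subset_Ioc_right hx)))
  have hY0 : ∀ x, 0 ≤ Y x := fun _ => ENNReal.toReal_nonneg
  have hYpow : ACOn (fun x => 1 / (m + 1) * |Y x| ^ (m + 1))
      (fun x => Y x ^ m * (G x).toReal) s t := by
    convert ((acOn_toReal_setLIntegral hG hfin).abs_rpow (lt_add_of_pos_left 1 hm) hst).const_mul
      hst (1 / (m + 1)) using 2 with x
    rw [PhiP_of_nonneg (lt_add_of_pos_left 1 hm) (hY0 x), add_sub_cancel_right]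
    field_simp
  have hint : ∫ x in Ioc s t, Y x ^ m * (G x).toReal = 1 / (m + 1) * Y t ^ (m + 1) := by
    rw [hYpow.setIntegral_eq_sub hst, abs_of_nonneg (hY0 t)]
    simp [Y, Real.zero_rpow hm1.ne']
  refine le_of_eq ?_
  calc ∫⁻ x in Ioc s t, (∫⁻ σ in Ioc s x, G σ) ^ m * G x
      = ∫⁻ x in Ioc s t, ENNReal.ofReal (Y x ^ m * (G x).toReal) := by
        refine lintegral_congr_ae ?_
        filter_upwards [ae_restrict_mem measurableSet_Ioc, ae_lt_top' hG hfin] with x hx hGx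
        rw [ENNReal.ofReal_mul' ENNReal.toReal_nonneg, ENNReal.ofReal_toReal hGx.ne,
          ← ENNReal.ofReal_rpow_of_nonneg (hY0 x) hm.le, hY_ofReal x hx.2]
    _ = ENNReal.ofReal (1 / (m + 1) * Y t ^ (m + 1)) := by
        rw [← hint, ofReal_integral_eq_lintegral_ofReal hYpow.integrableOn_Ioc
          (ae_of_all _ fun x => mul_nonneg (Real.rpow_nonneg (hY0 x) m) ENNReal.toReal_nonneg)]
    _ = _ := by
        rw [ENNReal.ofReal_mul (by positivity), ← ENNReal.ofReal_rpow_of_nonneg (hY0 t) hm1.le,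
          hY_ofReal t le_rfl]

section Holder

variable {α : Type*} [MeasurableSpace α] {p l : ℝ}

lemma lintegral_le_rpow_mul_lintegral_weight (μ : Measure α) (hp : 1 < p) {D U : α → ℝ≥0∞}
    (hDm : AEMeasurable D μ) (hU : AEMeasurable U μ) (hD0 : ∀ᵐ x ∂μ, D x ≠ 0)
    (hDtop : ∀ᵐ x ∂μ, D x ≠ ⊤) :
    ∫⁻ x, U x ∂μ ≤
      (∫⁻ x, D x ^ (-(1 / (p - 1))) ∂μ) ^ ((p - 1) / p) * (∫⁻ x, D x * U x ^ p ∂μ) ^ (1 / p) := by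
  have hp0 : 0 < p := by linarith
  have hp1 : p - 1 ≠ 0 := by linarith
  have hsplit : ∫⁻ x, U x ∂μ =
      ∫⁻ x, ((fun x => D x ^ (-(1 / p))) * fun x => D x ^ (1 / p) * U x) x ∂μ := by
    refine lintegral_congr_ae ?_
    filter_upwards [hD0, hDtop] with x h0 htop
    simp only [Pi.mul_apply]
    rw [← mul_assoc, ← ENNReal.rpow_add _ _ h0 htop, neg_add_cancel, ENNReal.rpow_zero, one_mul]
  rw [hsplit]
  refine (ENNReal.lintegral_mul_le_Lp_mul_Lq μ (Real.HolderConjugate.conjExponent hp).symm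
    (hDm.pow_const _) ((hDm.pow_const _).mul hU)).trans_eq ?_
  congr 2
  · refine lintegral_congr fun x => ?_
    rw [← ENNReal.rpow_mul]
    congr 1
    simp only [Real.conjExponent]
    field_simp
  · simp [Real.conjExponent]
  · refine lintegral_congr fun x => ?_
    rw [Pi.mul_apply, ENNReal.mul_rpow_of_nonneg _ _ hp0.le, ← ENNReal.rpow_mul,
      one_div_mul_cancel hp0.ne', ENNReal.rpow_one]

lemma mul_rpow_mul_rpow_le_of_le {Q D U V W Y : ℝ≥0∞} (hl0 : 0 < l) (hlp : l ≤ p)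
    (hD0 : D ≠ 0) (hDtop : D ≠ ⊤) (hW : W ≤ V ^ ((p - 1) / p) * Y ^ (1 / p)) :
    Q * W ^ l * U ^ (p - l) ≤
      (Q * D ^ (-((p - l) / p)) * V ^ (l * (p - 1) / p)) *
        (Y ^ (l / p) * (D * U ^ p) ^ ((p - l) / p)) := by
  have hp0 : 0 < p := by linarith
  have hpl : 0 ≤ (p - l) / p := div_nonneg (sub_nonneg.2 hlp) hp0.le
  have hU : D ^ (-((p - l) / p)) * (D * U ^ p) ^ ((p - l) / p) = U ^ (p - l) := by
    rw [ENNReal.mul_rpow_of_nonneg _ _ hpl, ← mul_assoc,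
      ← ENNReal.rpow_add _ _ hD0 hDtop, neg_add_cancel, ENNReal.rpow_zero, one_mul,
      ← ENNReal.rpow_mul, mul_div_cancel₀ _ hp0.ne']
  have hWl : W ^ l ≤ V ^ (l * (p - 1) / p) * Y ^ (l / p) := by
    refine (ENNReal.rpow_le_rpow hW hl0.le).trans_eq ?_
    rw [ENNReal.mul_rpow_of_nonneg _ _ hl0.le, ← ENNReal.rpow_mul, ← ENNReal.rpow_mul]
    congr 2 <;> ring
  calc Q * W ^ l * U ^ (p - l)
      ≤ Q * (V ^ (l * (p - 1) / p) * Y ^ (l / p)) *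
          (D ^ (-((p - l) / p)) * (D * U ^ p) ^ ((p - l) / p)) := by rw [hU]; gcongr
    _ = _ := by ring

lemma lintegral_mul_rpow_mul_rpow_le (μ : Measure α) (hl0 : 0 < l) (hlp : l < p)
    {Q D V Y G : α → ℝ≥0∞} (hQ : AEMeasurable Q μ) (hD : AEMeasurable D μ) (hV : AEMeasurable V μ)
    (hY : AEMeasurable Y μ) (hG : AEMeasurable G μ) :
    ∫⁻ x, (Q x * D x ^ (-((p - l) / p)) * V x ^ (l * (p - 1) / p)) *
        (Y x ^ (l / p) * G x ^ ((p - l) / p)) ∂μ ≤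
      (∫⁻ x, Q x ^ (p / l) * D x ^ (-((p - l) / l)) * V x ^ (p - 1) ∂μ) ^ (l / p) *
        (∫⁻ x, Y x ^ (l / (p - l)) * G x ∂μ) ^ ((p - l) / p) := by
  have hp0 : 0 < p := by linarith
  have hpl : 0 < p - l := by linarith
  have hconj : (p / l).HolderConjugate (p / (p - l)) := by
    rw [Real.holderConjugate_iff]
    exact ⟨(one_lt_div hl0).2 hlp, by field_simp; ring⟩
  refine (ENNReal.lintegral_mul_le_Lp_mul_Lq μ hconj ((hQ.mul (hD.pow_const _)).mul
    (hV.pow_const _)) ((hY.pow_const _).mul (hG.pow_const _))).trans_eq ?_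
  rw [one_div_div, one_div_div]
  congr 2 <;> refine lintegral_congr fun x => ?_
  · simp only [Pi.mul_apply]
    rw [ENNReal.mul_rpow_of_nonneg _ _ (by positivity),
      ENNReal.mul_rpow_of_nonneg _ _ (by positivity), ← ENNReal.rpow_mul, ← ENNReal.rpow_mul]
    congr 3 <;> field_simp
  · simp only [Pi.mul_apply]
    rw [ENNReal.mul_rpow_of_nonneg _ _ (by positivity), ← ENNReal.rpow_mul, ← ENNReal.rpow_mul,
      div_mul_div_cancel₀ hp0.ne', div_mul_div_cancel₀ hp0.ne', div_self hpl.ne', ENNReal.rpow_one]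

end Holder

lemma measurable_setLIntegral_Ioc (s : ℝ) (F : ℝ → ℝ≥0∞) :
    Measurable fun x => ∫⁻ σ in Ioc s x, F σ :=
  Monotone.measurable fun _ _ hxy => lintegral_mono_set (Ioc_subset_Ioc_right hxy)

variable {p l s t : ℝ} {q v : ℝ → ℝ}

lemma BDK_mono_set {S T : Set ℝ} (hlp : l ≤ p) (hl0 : 0 ≤ l) (hST : S ⊆ T) :
    BDK p l q v s S ≤ BDK p l q v s T := by
  have := hl0.trans hlp
  exact mul_le_mul_right (ENNReal.rpow_le_rpow (lintegral_mono_set hST) (by positivity)) _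

theorem lintegral_opial_le_BDK (hp : 1 < p) (hl0 : 0 < l) (hlp : l < p) (hst : s ≤ t)
    {U : ℝ → ℝ≥0∞} (hq : AEMeasurable q (volume.restrict (Ioc s t)))
    (hv : AEMeasurable v (volume.restrict (Ioc s t)))
    (hvpos : ∀ᵐ x ∂volume.restrict (Ioc s t), 0 < v x)
    (hU : AEMeasurable U (volume.restrict (Ioc s t))) :
    ∫⁻ x in Ioc s t, ENNReal.ofReal (q x) * (∫⁻ σ in Ioc s x, U σ) ^ l * U x ^ (p - l) ≤
      BDK p l q v s (Ioc s t) * ∫⁻ x in Ioc s t, ENNReal.ofReal (v x) * U x ^ p := by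
  have hp0 : 0 < p := by linarith
  have hpl : 0 < p - l := by linarith
  set Q : ℝ → ℝ≥0∞ := fun x => ENNReal.ofReal (q x)
  set D : ℝ → ℝ≥0∞ := fun x => ENNReal.ofReal (v x)
  set V : ℝ → ℝ≥0∞ := fun x => ∫⁻ σ in Ioc s x, D σ ^ (-(1 / (p - 1)))
  set G : ℝ → ℝ≥0∞ := fun x => D x * U x ^ p
  set Y : ℝ → ℝ≥0∞ := fun x => ∫⁻ σ in Ioc s x, G σ
  have hD : AEMeasurable D (volume.restrict (Ioc s t)) := hv.ennreal_ofReal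
  have hG : AEMeasurable G (volume.restrict (Ioc s t)) := hD.mul (hU.pow_const p)
  have hD0 : ∀ᵐ x ∂volume.restrict (Ioc s t), D x ≠ 0 :=
    hvpos.mono fun x hx => (ENNReal.ofReal_pos.2 hx).ne'
  have hW : ∀ x ∈ Ioc s t, ∫⁻ σ in Ioc s x, U σ ≤ V x ^ ((p - 1) / p) * Y x ^ (1 / p) :=
    fun x hx => by
      have hsub : Ioc s x ⊆ Ioc s t := Ioc_subset_Ioc_right hx.2
      exact lintegral_le_rpow_mul_lintegral_weight _ hp (hD.mono_set hsub) (hU.mono_set hsub)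
        (ae_restrict_of_ae_restrict_of_subset hsub hD0) (ae_of_all _ fun _ => ENNReal.ofReal_ne_top)
  have hYG : (∫⁻ x in Ioc s t, Y x ^ (l / (p - l)) * G x) ^ ((p - l) / p) ≤
      ENNReal.ofReal (((p - l) / p) ^ ((p - l) / p)) * ∫⁻ x in Ioc s t, G x := by
    have hexp : l / (p - l) + 1 = p / (p - l) := by field_simp; ring
    refine (ENNReal.rpow_le_rpow (lintegral_primitive_rpow_mul_le hst (div_pos hl0 hpl) hG)
      (by positivity)).trans_eq ?_
    rw [hexp, ENNReal.mul_rpow_of_nonneg _ _ (by positivity), ← ENNReal.rpow_mul, one_div_div,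
      div_mul_div_cancel₀ hpl.ne', div_self hp0.ne', ENNReal.rpow_one,
      ENNReal.ofReal_rpow_of_nonneg (by positivity) (by positivity)]
  calc ∫⁻ x in Ioc s t, Q x * (∫⁻ σ in Ioc s x, U σ) ^ l * U x ^ (p - l)
      ≤ ∫⁻ x in Ioc s t, (Q x * D x ^ (-((p - l) / p)) * V x ^ (l * (p - 1) / p)) *
          (Y x ^ (l / p) * G x ^ ((p - l) / p)) := by
        refine lintegral_mono_ae ?_
        filter_upwards [ae_restrict_mem measurableSet_Ioc, hD0] with x hx hx0
        exact mul_rpow_mul_rpow_le_of_le hl0 hlp.le hx0 ENNReal.ofReal_ne_top (hW x hx)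
    _ ≤ (∫⁻ x in Ioc s t, Q x ^ (p / l) * D x ^ (-((p - l) / l)) * V x ^ (p - 1)) ^ (l / p) *
          (∫⁻ x in Ioc s t, Y x ^ (l / (p - l)) * G x) ^ ((p - l) / p) :=
        lintegral_mul_rpow_mul_rpow_le _ hl0 hlp hq.ennreal_ofReal hD
          (measurable_setLIntegral_Ioc s _).aemeasurable
          (measurable_setLIntegral_Ioc s _).aemeasurable hG
    _ ≤ _ := (mul_le_mul_right hYG _).trans_eq (by rw [← mul_assoc, mul_comm (_ ^ _)]; rfl)

theorem ACOn.lintegral_opial_le_BDK {u u' : ℝ → ℝ} (hp : 1 < p) (hl0 : 0 < l) (hlp : l < p)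
    (hst : s ≤ t) (hu : ACOn u u' s t) (hus : u s = 0)
    (hq : AEMeasurable q (volume.restrict (Ioc s t)))
    (hv : AEMeasurable v (volume.restrict (Ioc s t)))
    (hvpos : ∀ᵐ x ∂volume.restrict (Ioc s t), 0 < v x) :
    ∫⁻ x in Ioc s t, ENNReal.ofReal (q x * |u x| ^ l * |u' x| ^ (p - l)) ≤
      BDK p l q v s (Ioc s t) * ∫⁻ x in Ioc s t, ENNReal.ofReal (v x * |u' x| ^ p) := by
  have hp0 : 0 < p := by linarith
  have hpl : 0 < p - l := by linarith
  have hu_le : ∀ x ∈ Ioc s t, ENNReal.ofReal |u x| ≤ ∫⁻ σ in Ioc s x, ENNReal.ofReal |u' σ| :=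
    fun x hx => by
      rw [hu.2 x (Ioc_subset_Icc_self hx), hus, zero_add, intervalIntegral.integral_of_le hx.1.le]
      simpa only [Real.enorm_eq_ofReal_abs] using
        enorm_integral_le_lintegral_enorm (μ := volume.restrict (Ioc s x)) u'
  calc ∫⁻ x in Ioc s t, ENNReal.ofReal (q x * |u x| ^ l * |u' x| ^ (p - l))
      ≤ ∫⁻ x in Ioc s t, ENNReal.ofReal (q x) * (∫⁻ σ in Ioc s x, ENNReal.ofReal |u' σ|) ^ l *
          ENNReal.ofReal |u' x| ^ (p - l) := by
        refine setLIntegral_mono_ae' measurableSet_Ioc (ae_of_all _ fun x hx => ?_)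
        rw [ENNReal.ofReal_mul' (by positivity), ENNReal.ofReal_mul' (by positivity),
          ← ENNReal.ofReal_rpow_of_nonneg (abs_nonneg _) hl0.le,
          ← ENNReal.ofReal_rpow_of_nonneg (abs_nonneg _) hpl.le]
        gcongr
        exact hu_le x hx
    _ ≤ BDK p l q v s (Ioc s t) *
          ∫⁻ x in Ioc s t, ENNReal.ofReal (v x) * ENNReal.ofReal |u' x| ^ p :=
        _root_.lintegral_opial_le_BDK hp hl0 hlp hst hq hv hvpos
          hu.integrableOn_Ioc.aemeasurable.abs.ennreal_ofReal
    _ = _ := by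
        simp_rw [ENNReal.ofReal_rpow_of_nonneg (abs_nonneg _) hp0.le]
        congr 1
        refine lintegral_congr fun x => ?_
        rw [ENNReal.ofReal_mul' (by positivity)]

end Opial

section Energy

lemma integral_nonpos_of_le_sub {α : Type*} [MeasurableSpace α] {μ : Measure α}
    {f P Q : α → ℝ} (hf : Integrable f μ) (hQ : Integrable Q μ) (hPm : AEStronglyMeasurable P μ)
    (hP0 : 0 ≤ᵐ[μ] P) (hfPQ : ∀ᵐ x ∂μ, f x ≤ Q x - P x)
    (hQP : ∫⁻ x, ENNReal.ofReal (Q x) ∂μ ≤ ∫⁻ x, ENNReal.ofReal (P x) ∂μ) :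
    ∫ x, f x ∂μ ≤ 0 := by
  have hP : Integrable P μ := by
    refine (hQ.sub hf).mono' hPm ?_
    filter_upwards [hP0, hfPQ] with x hx0 hx
    rw [Real.norm_of_nonneg hx0, Pi.sub_apply]
    linarith
  have hQ_le : ∫ x, Q x ∂μ ≤ ∫ x, P x ∂μ := by
    rw [integral_eq_lintegral_pos_part_sub_lintegral_neg_part hQ,
      integral_eq_lintegral_of_nonneg_ae hP0 hPm]
    exact (sub_le_self _ ENNReal.toReal_nonneg).trans
      (ENNReal.toReal_mono hP.lintegral_lt_top.ne hQP)
  calc ∫ x, f x ∂μ ≤ ∫ x, Q x - P x ∂μ := integral_mono_ae hf (hQ.sub hP) hfPQ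
    _ ≤ 0 := by rw [integral_sub hQ hP]; linarith

/-- The energy `(1 - 1/p) a |u'|^p + Φ(u)`, where `Φ` is the primitive of `φ` vanishing at `0`. -/
noncomputable def energy (p : ℝ) (φ a u u' : ℝ → ℝ) (τ : ℝ) : ℝ :=
  (1 - 1 / p) * (a τ * |u' τ| ^ p) + ∫ σ in (0 : ℝ)..u τ, φ σ

variable {p l n s t : ℝ} {φ a a' f u u' v' q : ℝ → ℝ}

lemma acOn_energy (hp : 1 < p) (hst : s ≤ t) (hφ : Continuous φ) (ha : ACOn a a' s t)
    (hu : ACOn u u' s t) (hv : ACOn (fun τ => PhiP p (u' τ)) v' s t)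
    (hode : ∀ᵐ τ ∂volume.restrict (Ioc s t),
      a τ * v' τ + (n - 1) * (a τ / τ) * PhiP p (u' τ) - f τ + φ (u τ) = 0) :
    ACOn (energy p φ a u u') (fun τ => f τ * u' τ - deltaA n p a a' τ * |u' τ| ^ p) s t := by
  have hpq : p.HolderConjugate p.conjExponent := .conjExponent hp
  have hpow : ACOn (fun τ => |u' τ| ^ p) (fun τ => p.conjExponent * u' τ * v' τ) s t := by
    simpa only [abs_PhiP_rpow_conj hpq, PhiP_conj_PhiP hpq] using hv.abs_rpow hpq.symm.lt hst
  have hprim : ACOn (fun τ => ∫ σ in (0 : ℝ)..u τ, φ σ) (fun τ => φ (u τ) * u' τ) s t :=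
    hu.comp hst (fun y => (hφ.integral_hasStrictDerivAt 0 y).hasDerivAt) hφ
  refine (((ha.mul hst hpow).const_mul hst (1 - 1 / p)).add hst hprim).congr_deriv hst ?_
  have hconj : (1 - 1 / p) * p.conjExponent = 1 := by
    have := hpq.sub_one_ne_zero
    rw [Real.conjExponent]
    field_simp
  filter_upwards [hode] with τ hτ
  simp only [deltaA]
  linear_combination u' τ * hτ + a τ * u' τ * v' τ * hconj -
    (n - 1) * (a τ / τ) * PhiP_mul_self hp (u' τ)

lemma aemeasurable_deltaA (hst : s ≤ t) (ha : ACOn a a' s t) :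
    AEMeasurable (deltaA n p a a') (volume.restrict (Ioc s t)) := by
  have ha_meas : AEMeasurable a (volume.restrict (Ioc s t)) :=
    ((ha.continuousOn hst).mono Ioc_subset_Icc_self).aemeasurable measurableSet_Ioc
  exact ((ha_meas.const_mul _).div aemeasurable_id).sub
    (ha.integrableOn_Ioc.aemeasurable.const_mul _)

lemma continuousOn_of_continuousOn_PhiP {w : ℝ → ℝ} {S : Set ℝ} (hp : 1 < p)
    (hw : ContinuousOn (fun τ => PhiP p (w τ)) S) : ContinuousOn w S := by
  have hpq : p.HolderConjugate p.conjExponent := .conjExponent hp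
  simpa only [Function.comp_def, PhiP_conj_PhiP hpq] using
    (continuous_PhiP hpq.symm.lt).comp_continuousOn hw

lemma integrableOn_mul_abs_rpow_mul_abs_rpow {w : ℝ → ℝ} {c d : ℝ} (hc : 0 ≤ c) (hd : 0 ≤ d)
    (hq : IntegrableOn q (Ioc s t)) (hu : ContinuousOn u (Icc s t))
    (hw : ContinuousOn w (Icc s t)) :
    IntegrableOn (fun τ => q τ * |u τ| ^ c * |w τ| ^ d) (Ioc s t) := by
  rw [← integrableOn_Icc_iff_integrableOn_Ioc] at hq ⊢
  exact (hq.mul_continuousOn (hu.abs.rpow_const fun _ _ => .inr hc) isCompact_Icc).mul_continuousOn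
    (hw.abs.rpow_const fun _ _ => .inr hd) isCompact_Icc

theorem energy_le_energy_left {θ : ℝ} (hp : 1 < p) (hl0 : 0 < l) (hlp : l < p) (hst : s ≤ t)
    (hφ : Continuous φ) (hθ : 0 ≤ θ) (ha : ACOn a a' s t) (hu : ACOn u u' s t)
    (hv : ACOn (fun τ => PhiP p (u' τ)) v' s t) (hus : u s = 0)
    (hq : IntegrableOn q (Ioc s t))
    (hδ : ∀ᵐ τ ∂volume.restrict (Ioc s t), 0 < deltaA n p a a' τ)
    (hgrowth : ∀ᵐ τ ∂volume.restrict (Ioc s t), f τ * u' τ ≤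
      θ * q τ * |u τ| ^ l * |u' τ| ^ (p - l) + (1 - θ) * deltaA n p a a' τ * |u' τ| ^ p)
    (hode : ∀ᵐ τ ∂volume.restrict (Ioc s t),
      a τ * v' τ + (n - 1) * (a τ / τ) * PhiP p (u' τ) - f τ + φ (u τ) = 0)
    (hK : BDK p l q (deltaA n p a a') s (Ioc s t) ≤ 1) :
    energy p φ a u u' t ≤ energy p φ a u u' s := by
  have hE := acOn_energy hp hst hφ ha hu hv hode
  have hu' : ContinuousOn u' (Icc s t) := continuousOn_of_continuousOn_PhiP hp (hv.continuousOn hst)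
  have hδm := aemeasurable_deltaA (n := n) (p := p) hst ha
  have hPm : AEMeasurable (fun τ => deltaA n p a a' τ * |u' τ| ^ p) (volume.restrict (Ioc s t)) :=
    hδm.mul (hu.integrableOn_Ioc.aemeasurable.abs.pow_const p)
  have hopial : ∫⁻ τ in Ioc s t, ENNReal.ofReal (q τ * |u τ| ^ l * |u' τ| ^ (p - l)) ≤
      ∫⁻ τ in Ioc s t, ENNReal.ofReal (deltaA n p a a' τ * |u' τ| ^ p) :=
    (hu.lintegral_opial_le_BDK hp hl0 hlp hst hus hq.aemeasurable hδm hδ).trans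
      (mul_le_of_le_one_left' hK)
  rw [← sub_nonpos, ← hE.setIntegral_eq_sub hst]
  refine integral_nonpos_of_le_sub hE.integrableOn_Ioc
    ((integrableOn_mul_abs_rpow_mul_abs_rpow hl0.le (sub_nonneg.2 hlp.le) hq
      (hu.continuousOn hst) hu').const_mul θ) (hPm.const_mul θ).aestronglyMeasurable ?_ ?_ ?_
  · filter_upwards [hδ] with τ hτ
    exact mul_nonneg hθ (mul_nonneg hτ.le (by positivity))
  · filter_upwards [hgrowth] with τ hτ
    linarith
  · simp_rw [ENNReal.ofReal_mul hθ, lintegral_const_mul' _ _ ENNReal.ofReal_ne_top]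
    gcongr

end Energy

section Bound

lemma nonneg_of_continuousOn_of_ae_nonneg {g : ℝ → ℝ} {s t x : ℝ} (hst : s < t)
    (hg : ContinuousOn g (Icc s t)) (h0 : ∀ᵐ y ∂volume.restrict (Ioc s t), 0 ≤ g y)
    (hx : x ∈ Icc s t) : 0 ≤ g x := by
  have hae : g =ᵐ[volume.restrict (Icc s t)] fun y => |g y| := by
    rw [Measure.restrict_congr_set Ioc_ae_eq_Icc.symm]
    exact h0.mono fun y hy => (abs_of_nonneg hy).symm
  rw [Measure.eqOn_Icc_of_ae_eq volume hst.ne hae hg hg.abs hx]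
  exact abs_nonneg _

lemma intervalIntegral_zero_abs_of_odd {φ : ℝ → ℝ} (hφ : ∀ x, φ (-x) = -φ x) (x : ℝ) :
    ∫ σ in (0 : ℝ)..|x|, φ σ = ∫ σ in (0 : ℝ)..x, φ σ := by
  rcases abs_choice x with hx | hx
  · rw [hx]
  · have hneg := intervalIntegral.integral_comp_neg (a := 0) (b := x) φ
    simp only [hφ, intervalIntegral.integral_neg, neg_zero] at hneg
    rw [hx, intervalIntegral.integral_symm, ← hneg, neg_neg]

theorem apriori_bound_nondivergent_general {p l n θ : ℝ} {R : ℝ≥0∞} {φ a a' q u u' v' : ℝ → ℝ}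
    {h : ℝ → ℝ → ℝ → ℝ} (hp : 1 < p) (hl0 : 0 < l) (hlp : l < p) (hθ : 0 ≤ θ)
    (hφ : Continuous φ)
    (ha : ∀ r : ℝ, 0 < r → ENNReal.ofReal r < R → ACOn a a' 0 r)
    (ha0 : ∀ᵐ τ ∂(volume.restrict {τ : ℝ | 0 < τ ∧ ENNReal.ofReal τ < R}), 0 ≤ a τ)
    (hδ : ∀ᵐ τ ∂(volume.restrict {τ : ℝ | 0 < τ ∧ ENNReal.ofReal τ < R}), 0 < deltaA n p a a' τ)
    (hq : ∀ r : ℝ, 0 < r → ENNReal.ofReal r < R → IntegrableOn q (Ioc 0 r))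
    (hgrowth : ∀ᵐ τ ∂(volume.restrict {τ : ℝ | 0 < τ ∧ ENNReal.ofReal τ < R}),
      ∀ lam₀ lam₁ : ℝ, h τ lam₀ lam₁ * lam₁ ≤
        θ * q τ * |lam₀| ^ l * |lam₁| ^ (p - l) + (1 - θ) * deltaA n p a a' τ * |lam₁| ^ p)
    (hK : BDK p l q (deltaA n p a a') 0 {τ : ℝ | 0 < τ ∧ ENNReal.ofReal τ < R} ≤ 1)
    (hu : ∀ r : ℝ, 0 < r → ENNReal.ofReal r < R → ACOn u u' 0 r)
    (hv : ∀ r : ℝ, 0 < r → ENNReal.ofReal r < R → ACOn (fun τ => PhiP p (u' τ)) v' 0 r)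
    (hu0 : u 0 = 0)
    (hode : ∀ᵐ τ ∂(volume.restrict {τ : ℝ | 0 < τ ∧ ENNReal.ofReal τ < R}),
      a τ * v' τ + (n - 1) * (a τ / τ) * PhiP p (u' τ)
        - h τ (u τ) (u' τ) + φ (u τ) = 0)
    (r : ℝ) (hr : 0 < r) (hrR : ENNReal.ofReal r < R) :
    ∫ σ in (0 : ℝ)..u r, φ σ ≤ (1 - 1 / p) * a 0 * |u' 0| ^ p := by
  have hsub : Ioc 0 r ⊆ {τ : ℝ | 0 < τ ∧ ENNReal.ofReal τ < R} := fun τ hτ =>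
    ⟨hτ.1, (ENNReal.ofReal_le_ofReal hτ.2).trans_lt hrR⟩
  have hE : energy p φ a u u' r ≤ energy p φ a u u' 0 :=
    energy_le_energy_left hp hl0 hlp hr.le hφ hθ (ha r hr hrR) (hu r hr hrR) (hv r hr hrR) hu0
      (hq r hr hrR) (ae_restrict_of_ae_restrict_of_subset hsub hδ)
      ((ae_restrict_of_ae_restrict_of_subset hsub hgrowth).mono fun τ hτ => hτ (u τ) (u' τ))
      (ae_restrict_of_ae_restrict_of_subset hsub hode)
      ((BDK_mono_set hlp.le hl0.le hsub).trans hK)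
  have har : 0 ≤ a r := nonneg_of_continuousOn_of_ae_nonneg hr ((ha r hr hrR).continuousOn hr.le)
    (ae_restrict_of_ae_restrict_of_subset hsub ha0) (right_mem_Icc.2 hr.le)
  have hkin : 0 ≤ (1 - 1 / p) * (a r * |u' r| ^ p) :=
    mul_nonneg (sub_nonneg.2 ((div_le_one (zero_lt_one.trans hp)).2 hp.le)) (by positivity)
  simp only [energy, hu0, intervalIntegral.integral_same, add_zero, ← mul_assoc] at hE hkin
  linarith

end Bound

/-- **A priori bound (nondivergent form)**, Theorem 2 i) of the paper. -/
theorem apriori_bound_nondivergent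
    (p l n : ℝ) (R : ℝ≥0∞)
    (hp : 1 < p) (hl0 : 0 < l) (hlp : l < p) (hn : 1 ≤ n) (hR : 0 < R)
    (φ : ℝ → ℝ) (hφcont : Continuous φ) (hφodd : ∀ t : ℝ, φ (-t) = -φ t)
    (hφsign : ∀ᵐ τ ∂(volume : Measure ℝ), 0 < τ * φ τ)
    (a a' : ℝ → ℝ)
    (haAC : ∀ r : ℝ, 0 < r → ENNReal.ofReal r < R → ACOn a a' 0 r)
    (q : ℝ → ℝ) (hqmeas : Measurable q)
    (hapos : ∀ᵐ τ ∂(volume.restrict {τ : ℝ | 0 < τ ∧ ENNReal.ofReal τ < R}), 0 < a τ)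
    (hvpos : ∀ᵐ τ ∂(volume.restrict {τ : ℝ | 0 < τ ∧ ENNReal.ofReal τ < R}), 0 < deltaA n p a a' τ)
    (hvint : ∀ r : ℝ, 0 < r → ENNReal.ofReal r < R →
      IntegrableOn (deltaA n p a a') (Set.Ioc 0 r) ∧
        IntegrableOn (fun τ => deltaA n p a a' τ ^ (-(1 / (p - 1)))) (Set.Ioc 0 r))
    (hqint : ∀ r : ℝ, 0 < r → ENNReal.ofReal r < R → IntegrableOn q (Set.Ioc 0 r))
    (h : ℝ → ℝ → ℝ → ℝ)
    (hhmeas : ∀ lam₀ lam₁ : ℝ, Measurable fun τ => h τ lam₀ lam₁)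
    (hhcont : ∀ τ : ℝ, Continuous fun z : ℝ × ℝ => h τ z.1 z.2)
    (θ : ℝ) (hθ0 : 0 < θ) (hθ1 : θ ≤ 1)
    (hq0 : ∀ᵐ τ ∂(volume.restrict {τ : ℝ | 0 < τ ∧ ENNReal.ofReal τ < R}), 0 ≤ q τ)
    (hgrowth : ∀ᵐ τ ∂(volume.restrict {τ : ℝ | 0 < τ ∧ ENNReal.ofReal τ < R}),
      ∀ lam₀ lam₁ : ℝ, h τ lam₀ lam₁ * lam₁ ≤
        θ * q τ * |lam₀| ^ l * |lam₁| ^ (p - l) + (1 - θ) * deltaA n p a a' τ * |lam₁| ^ p)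
    (hK : BDK p l q (deltaA n p a a') 0 {τ : ℝ | 0 < τ ∧ ENNReal.ofReal τ < R} ≤ 1)
    (u u' v' : ℝ → ℝ)
    (huAC : ∀ r : ℝ, 0 < r → ENNReal.ofReal r < R → ACOn u u' 0 r)
    (hvAC : ∀ r : ℝ, 0 < r → ENNReal.ofReal r < R →
      ACOn (fun τ => PhiP p (u' τ)) v' 0 r)
    (hu0 : u 0 = 0)
    (hODE : ∀ᵐ τ ∂(volume.restrict {τ : ℝ | 0 < τ ∧ ENNReal.ofReal τ < R}),
      a τ * v' τ + (n - 1) * (a τ / τ) * PhiP p (u' τ)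
        - h τ (u τ) (u' τ) + φ (u τ) = 0) :
    ∀ r : ℝ, 0 < r → ENNReal.ofReal r < R →
      (∫ σ in (0:ℝ)..(|u r|), φ σ) ≤ (1 - 1 / p) * a 0 * |u' 0| ^ p := by
  intro r hr hrR
  rw [intervalIntegral_zero_abs_of_odd hφodd]
  exact apriori_bound_nondivergent_general hp hl0 hlp hθ0.le hφcont haAC
    (hapos.mono fun _ hτ => hτ.le) hvpos hqint hgrowth hK huAC hvAC hu0 hODE r hr hrR
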